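/- For every positive integer n with Topological(n), there exists a positive integer n' with Binary(n'), Leaves(n') = Leaves(n), and n' ≥ n. In tree language: for every topological tree there is a binary tree with the same number of leaves and a Matula number at least as large; hence the maximiser of the Matula number among topological trees with a prescribed number of leaves is a binary tree. -/

import Mathlib

/-- `nthPrime m` is the `m`-th prime number in ascending order (1-indexed):
`nthPrime 1 = 2`, `nthPrime 2 = 3`, `nthPrime 3 = 5`, `nthPrime 4 = 7`, ... -/
noncomputable def nthPrime (m : ℕ) : ℕ := Nat.nth Nat.Prime (m - 1)

/-- `MatulaTopological n` says that `n` is the Matula number of a topological tree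
(a rooted tree with no vertex of outdegree 1): `MatulaTopological 1` holds, and for
`n > 1`, `MatulaTopological n` holds iff `n` has at least two prime factors counted
with multiplicity and `MatulaTopological m` holds for every positive `m` such that the
prime `nthPrime m` divides `n`.  (Since `nthPrime m ∣ n` forces `m < n`, this
recursion is well-founded, so the inductive predicate is its unique fixed point.) -/
inductive MatulaTopological : ℕ → Prop
  | one : MatulaTopological 1
  | node (n : ℕ) (hn : 1 < n) (hbranches : 2 ≤ n.primeFactorsList.length)
      (hrec : ∀ m : ℕ, 1 ≤ m → nthPrime m ∣ n → MatulaTopological m) :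
      MatulaTopological n

/-- `MatulaBinary n` says that `n` is the Matula number of a binary tree (every vertex
has outdegree 0 or 2): `MatulaBinary 1` holds, and for `n > 1`, `MatulaBinary n` holds
iff `n = nthPrime a * nthPrime b` for some positive `a`, `b` with `MatulaBinary a`
and `MatulaBinary b`. -/
inductive MatulaBinary : ℕ → Prop
  | one : MatulaBinary 1
  | node (a b : ℕ) (ha : 1 ≤ a) (hb : 1 ≤ b)
      (hA : MatulaBinary a) (hB : MatulaBinary b) :
      MatulaBinary (nthPrime a * nthPrime b)

lemma count_prime_add_two_le (t : ℕ) (ht : 2 ≤ t) : Nat.count Nat.Prime t + 2 ≤ t := by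
  induction t, ht using Nat.le_induction with
  | base =>
      simp [Nat.count_succ, Nat.count_zero]
      exact ⟨Nat.not_prime_zero, Nat.not_prime_one⟩
  | succ n hn ih =>
      have : Nat.count Nat.Prime (n + 1) ≤ Nat.count Nat.Prime n + 1 := by
        rw [Nat.count_succ]; split <;> omega
      omega

/-- `matulaLeaves n` is the number of leaves of the rooted tree with Matula number `n`:
`matulaLeaves 1 = 1`, and if `n > 1` has multiset of prime factors
`nthPrime m₁, …, nthPrime m_r` (counted with multiplicity), then
`matulaLeaves n = matulaLeaves m₁ + ⋯ + matulaLeaves m_r`.  Here the 1-indexed prime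
index of a prime factor `t` is recovered as `Nat.count Nat.Prime t + 1`, since
`nthPrime (Nat.count Nat.Prime t + 1) = Nat.nth Nat.Prime (Nat.count Nat.Prime t) = t`
for prime `t`. -/
def matulaLeaves (n : ℕ) : ℕ :=
  if n ≤ 1 then 1
  else (n.primeFactorsList.attach.map
    (fun t => matulaLeaves (Nat.count Nat.Prime t.1 + 1))).sum
decreasing_by
  rename_i hn
  have hmem := t.2
  have hp : (t : ℕ).Prime := Nat.prime_of_mem_primeFactorsList hmem
  have hdvd : (t : ℕ) ∣ n := Nat.dvd_of_mem_primeFactorsList hmem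
  have hle : (t : ℕ) ≤ n := Nat.le_of_dvd (by omega) hdvd
  have := count_prime_add_two_le t.1 hp.two_le
  omega

lemma nthPrime_prime (m : ℕ) : (nthPrime m).Prime := Nat.prime_nth_prime _

lemma count_nthPrime (m : ℕ) (hm : 1 ≤ m) : Nat.count Nat.Prime (nthPrime m) + 1 = m := by
  unfold nthPrime
  rw [Nat.count_nth_of_infinite Nat.infinite_setOfPred_prime]
  omega

lemma nthPrime_count (t : ℕ) (ht : t.Prime) : nthPrime (Nat.count Nat.Prime t + 1) = t := by
  unfold nthPrime
  simp [Nat.nth_count ht]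

lemma nthPrime_mono {a b : ℕ} (h : a ≤ b) : nthPrime a ≤ nthPrime b :=
  (Nat.nth_monotone Nat.infinite_setOfPred_prime) (by omega)

lemma le_nthPrime (m : ℕ) (hm : 1 ≤ m) : m ≤ nthPrime m := by
  have h1 := count_nthPrime m hm
  have h2 := count_prime_add_two_le _ (nthPrime_prime m).two_le
  omega

lemma leaves_eq (n : ℕ) (hn : 1 < n) : matulaLeaves n =
    (n.primeFactorsList.map (fun t => matulaLeaves (Nat.count Nat.Prime t + 1))).sum := by
  rw [matulaLeaves, if_neg (by omega)]
  congr 1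
  exact List.attach_map_val
    (f := fun t => matulaLeaves (Nat.count Nat.Prime t + 1))

lemma one_lt_node (a b : ℕ) : 1 < nthPrime a * nthPrime b := by
  have := (nthPrime_prime a).two_le
  have := (nthPrime_prime b).two_le
  nlinarith

lemma leaves_node (a b : ℕ) (ha : 1 ≤ a) (hb : 1 ≤ b) :
    matulaLeaves (nthPrime a * nthPrime b) = matulaLeaves a + matulaLeaves b := by
  rw [leaves_eq _ (one_lt_node a b)]
  have hp := Nat.perm_primeFactorsList_mul (nthPrime_prime a).ne_zero (nthPrime_prime b).ne_zero
  rw [(hp.map _).sum_eq, Nat.primeFactorsList_prime (nthPrime_prime a),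
    Nat.primeFactorsList_prime (nthPrime_prime b)]
  simp [count_nthPrime a ha, count_nthPrime b hb]

/-- A prime index can be replaced by a binary tree at least as large. -/
def Improvable (m : ℕ) : Prop :=
  ∃ b : ℕ, 1 ≤ b ∧ MatulaBinary b ∧ matulaLeaves b = matulaLeaves m ∧ m ≤ b

/-- Merging branches: a nonempty list of branches can be replaced by a single binary branch. -/
lemma merge_list (l : List ℕ) (hne : l ≠ [])
    (hl : ∀ t ∈ l, t.Prime ∧ Improvable (Nat.count Nat.Prime t + 1)) :
    ∃ c : ℕ, 1 ≤ c ∧ MatulaBinary c ∧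
      matulaLeaves c = (l.map (fun t => matulaLeaves (Nat.count Nat.Prime t + 1))).sum ∧
      l.prod ≤ nthPrime c ∧ (2 ≤ l.length → l.prod ≤ c) := by
  induction l with
  | nil => exact absurd rfl hne
  | cons t l ih =>
    obtain ⟨ht, b, hb1, hbB, hbL, hb⟩ := hl t (by simp)
    have htb : t ≤ nthPrime b := by
      have := nthPrime_mono hb
      rwa [nthPrime_count t ht] at this
    by_cases hnil : l = []
    · subst hnil
      exact ⟨b, hb1, hbB, by simpa using hbL, by simpa using htb, by simp⟩
    · obtain ⟨c, hc1, hcB, hcL, hc, -⟩ := ih hnil (fun s hs => hl s (by simp [hs]))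
      have hle : (t :: l).prod ≤ nthPrime b * nthPrime c := by
        rw [List.prod_cons]
        exact Nat.mul_le_mul htb hc
      have h1 := one_lt_node b c
      refine ⟨nthPrime b * nthPrime c, h1.le, .node b c hb1 hc1 hbB hcB, ?_,
        hle.trans (le_nthPrime _ h1.le), fun _ => hle⟩
      rw [leaves_node b c hb1 hc1, hbL, hcL]
      simp

lemma improvable_of_topological (n : ℕ) (hT : MatulaTopological n) : Improvable n := by
  induction hT with
  | one => exact ⟨1, le_rfl, .one, rfl, le_rfl⟩
  | node n hn hbr _ ih =>
    obtain ⟨c, hc1, hcB, hcL, -, hc⟩ := merge_list n.primeFactorsList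
      (by intro h; simp [h] at hbr) (fun t ht => by
        have hp := Nat.prime_of_mem_primeFactorsList ht
        refine ⟨hp, ih _ (by omega) ?_⟩
        rw [nthPrime_count t hp]
        exact Nat.dvd_of_mem_primeFactorsList ht)
    refine ⟨c, hc1, hcB, ?_, ?_⟩
    · rw [hcL, leaves_eq n hn]
    · have := hc hbr
      rwa [Nat.prod_primeFactorsList (by omega)] at this

/-- For every topological tree there is a binary tree with the same number of leaves and
a Matula number at least as large; hence the maximiser of the Matula number among
topological trees with a prescribed number of leaves is a binary tree. -/
theorem exists_binary_ge_of_topological (n : ℕ) (hn : 1 ≤ n) (hT : MatulaTopological n) :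
    ∃ n' : ℕ, 1 ≤ n' ∧ MatulaBinary n' ∧ matulaLeaves n' = matulaLeaves n ∧ n ≤ n' := by
  exact improvable_of_topological n hT
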